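/- Let X and Y be nontrivial complex Banach spaces and let C_b(B_X, Y) denote the Banach space of all bounded continuous Y-valued functions on the closed unit ball B_X of X, with the supremum norm. Then C_b(B_X, Y) has the diameter two property: every nonempty relatively weakly open subset of its closed unit ball has diameter two. -/

import Mathlib

open BoundedContinuousFunction

set_option maxHeartbeats 1000000
set_option synthInstance.maxHeartbeats 1000000

/-!
Multiplying a fixed function by continuous bumps with pairwise disjoint supports gives a bounded
sequence of functions whose unimodular combinations stay bounded, and such a sequence is weakly
null. Hence a function `f` of norm at most one can be moved, on the support of a bump `φ n` far out
in the sequence, towards a constant `y` or `-y` of norm one, through the pointwise convex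
combination `f + φ n • (± y - f)`, without leaving the unit ball or a given weak neighbourhood of
`f`. The two modifications are at distance two, since they take the values `y` and `-y` at a peak
of `φ n`.
-/

open Filter Metric Set Topology
open Function hiding const

section WeakTopology

variable {𝕜 E ι : Type*}

theorem tendsto_toWeakSpace_iff [CommSemiring 𝕜] [TopologicalSpace 𝕜] [ContinuousAdd 𝕜]
    [ContinuousConstSMul 𝕜 𝕜] [AddCommMonoid E] [Module 𝕜 E] [TopologicalSpace E]
    {l : Filter ι} {u : ι → E} {x : E} :
    Tendsto (fun i => toWeakSpace 𝕜 E (u i)) l (𝓝 (toWeakSpace 𝕜 E x)) ↔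
      ∀ L : StrongDual 𝕜 E, Tendsto (fun i => L (u i)) l (𝓝 (L x)) := by
  have inducing : IsInducing fun (z : WeakSpace 𝕜 E) (L : StrongDual 𝕜 E) =>
      (topDualPairing 𝕜 E).flip z L := ⟨rfl⟩
  exact inducing.tendsto_nhds_iff.trans tendsto_pi_nhds

variable [RCLike 𝕜] [SeminormedAddCommGroup E] [NormedSpace 𝕜 E]

theorem summable_norm_apply_of_norm_sum_smul_le {e : ι → E} {C : ℝ}
    (h : ∀ (c : ι → 𝕜) (s : Finset ι), (∀ i, ‖c i‖ = 1) → ‖∑ i ∈ s, c i • e i‖ ≤ C)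
    (L : StrongDual 𝕜 E) : Summable fun i => ‖L (e i)‖ := by
  choose c norm_c c_mul using fun i => RCLike.exists_norm_eq_mul_self (L (e i))
  refine summable_of_sum_le (c := ‖L‖ * C) (fun _ => norm_nonneg _) fun s => ?_
  have apply_sum : L (∑ i ∈ s, c i • e i) = ((∑ i ∈ s, ‖L (e i)‖ : ℝ) : 𝕜) := by
    simp only [map_sum, map_smul, smul_eq_mul, ← c_mul]
  calc ∑ i ∈ s, ‖L (e i)‖ ≤ ‖((∑ i ∈ s, ‖L (e i)‖ : ℝ) : 𝕜)‖ := by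
        rw [RCLike.norm_ofReal]
        exact le_abs_self _
    _ = ‖L (∑ i ∈ s, c i • e i)‖ := by rw [apply_sum]
    _ ≤ ‖L‖ * C := L.le_opNorm_of_le (h c s norm_c)

variable (𝕜 E) in
/-- The diameter two property of a normed space: nonempty relatively weakly open subsets of the
closed unit ball have diameter two. A subset of `WeakSpace 𝕜 E` is regarded as a subset of `E`
through `toWeakSpace`, so that the diameter is that of the norm. -/
def HasDiameterTwoProperty : Prop :=
  ∀ W : Set (WeakSpace 𝕜 E), IsOpen W →
    (toWeakSpace 𝕜 E ⁻¹' W ∩ closedBall (0 : E) 1).Nonempty →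
      diam (toWeakSpace 𝕜 E ⁻¹' W ∩ closedBall (0 : E) 1) = 2

theorem HasDiameterTwoProperty.of_tendsto {l : Filter ι} [l.NeBot]
    (h : ∀ x ∈ closedBall (0 : E) 1, ∃ u v : ι → E,
      (∀ i, u i ∈ closedBall 0 1) ∧ (∀ i, v i ∈ closedBall 0 1) ∧
      Tendsto (fun i => toWeakSpace 𝕜 E (u i)) l (𝓝 (toWeakSpace 𝕜 E x)) ∧
      Tendsto (fun i => toWeakSpace 𝕜 E (v i)) l (𝓝 (toWeakSpace 𝕜 E x)) ∧
      ∀ i, 2 ≤ dist (u i) (v i)) :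
    HasDiameterTwoProperty 𝕜 E := by
  rintro W hW ⟨x, hxW, hx⟩
  obtain ⟨u, v, hu, hv, tendsto_u, tendsto_v, two_le_dist⟩ := h x hx
  obtain ⟨i, huW, hvW⟩ :=
    ((tendsto_u.eventually_mem (hW.mem_nhds hxW)).and
      (tendsto_v.eventually_mem (hW.mem_nhds hxW))).exists
  apply le_antisymm
  · calc diam (toWeakSpace 𝕜 E ⁻¹' W ∩ closedBall (0 : E) 1)
        ≤ diam (closedBall (0 : E) 1) := diam_mono inter_subset_right isBounded_closedBall
      _ ≤ 2 * 1 := diam_closedBall zero_le_one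
      _ = 2 := mul_one 2
  · exact (two_le_dist i).trans <| dist_le_diam_of_mem
      (isBounded_closedBall.subset inter_subset_right) ⟨huW, hu i⟩ ⟨hvW, hv i⟩

end WeakTopology

section DisjointSupports

variable {𝕜 K Y ι : Type*} [TopologicalSpace K] [SeminormedAddCommGroup Y]

theorem norm_sum_le_of_pairwiseDisjoint_support {f : ι → K →ᵇ Y} {s : Finset ι} {C : ℝ}
    (hC : 0 ≤ C) (hf : ∀ i ∈ s, ‖f i‖ ≤ C)
    (disjoint : (s : Set ι).PairwiseDisjoint fun i => support (f i)) :
    ‖∑ i ∈ s, f i‖ ≤ C := by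
  refine (norm_le hC).2 fun x => ?_
  rw [BoundedContinuousFunction.sum_apply]
  by_cases h : ∃ i ∈ s, f i x ≠ 0
  · obtain ⟨i, hi, hix⟩ := h
    have vanish : ∀ j ∈ s, j ≠ i → f j x = 0 := fun j hj hji =>
      notMem_support.1 (disjoint_left.1 (disjoint hi hj hji.symm) hix)
    rw [Finset.sum_eq_single_of_mem i hi vanish]
    exact ((f i).norm_coe_le_norm x).trans (hf i hi)
  · push Not at h
    rwa [Finset.sum_eq_zero h, norm_zero]

theorem tendsto_toWeakSpace_zero_of_pairwise_disjoint_support [RCLike 𝕜] [NormedSpace 𝕜 Y]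
    {f : ι → K →ᵇ Y} {C : ℝ} (hf : ∀ i, ‖f i‖ ≤ C)
    (disjoint : Pairwise (Disjoint on fun i => support (f i))) :
    Tendsto (fun i => toWeakSpace 𝕜 (K →ᵇ Y) (f i)) cofinite
      (𝓝 (toWeakSpace 𝕜 (K →ᵇ Y) 0)) := by
  have norm_sum_smul_le (c : ι → 𝕜) (s : Finset ι) (hc : ∀ i, ‖c i‖ = 1) :
      ‖∑ i ∈ s, c i • f i‖ ≤ |C| := by
    refine norm_sum_le_of_pairwiseDisjoint_support (abs_nonneg C) (fun i _ => ?_)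
      fun i _ j _ hij => (disjoint hij).mono (support_const_smul_subset _ _)
        (support_const_smul_subset _ _)
    calc ‖c i • f i‖ ≤ ‖c i‖ * ‖f i‖ := norm_smul_le _ _
      _ = ‖f i‖ := by rw [hc, one_mul]
      _ ≤ |C| := (hf i).trans (le_abs_self C)
  refine tendsto_toWeakSpace_iff.2 fun L => ?_
  rw [map_zero, tendsto_zero_iff_norm_tendsto_zero]
  exact (summable_norm_apply_of_norm_sum_smul_le norm_sum_smul_le L).tendsto_cofinite_zero

end DisjointSupports

section Bumps

theorem exists_seq_bump_pairwise_disjoint_support (K : Type*) [TopologicalSpace K] [T35Space K]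
    [Infinite K] :
    ∃ φ : ℕ → K →ᵇ ℝ, (∀ n x, φ n x ∈ Icc 0 1) ∧ (∀ n, ∃ x, φ n x = 1) ∧
      Pairwise (Disjoint on fun n => support (φ n)) := by
  obtain ⟨U, U_infinite, U_open, U_disjoint⟩ := exists_seq_infinite_isOpen_pairwise_disjoint K
  choose x hx using fun n => (U_infinite n).nonempty
  choose g g_cont g_x g_compl using fun n =>
    CompletelyRegularSpace.completely_regular_isOpen (x n) (U n) (U_open n) (hx n)
  let φ (n : ℕ) : K →ᵇ ℝ := ofNormedAddCommGroup (fun z => 1 - (g n z : ℝ)) (by fun_prop) 1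
    fun z => by
      rw [Real.norm_of_nonneg (unitInterval.one_minus_nonneg _)]
      exact unitInterval.one_minus_le_one _
  have support_subset (n : ℕ) : support (φ n) ⊆ U n := by
    refine support_subset_iff'.2 fun z hz => ?_
    simp [φ, g_compl n hz]
  refine ⟨φ, fun n z => ?_, fun n => ⟨x n, ?_⟩, fun m n hmn => ?_⟩
  · exact ⟨unitInterval.one_minus_nonneg _, unitInterval.one_minus_le_one _⟩
  · simp [φ, g_x]
  · exact (U_disjoint hmn).mono (support_subset m) (support_subset n)

variable {𝕜 K Y ι : Type*} [TopologicalSpace K] [SeminormedAddCommGroup Y] [NormedSpace ℝ Y]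

theorem add_smul_sub_mem_closedBall {φ : K →ᵇ ℝ} (hφ : ∀ x, φ x ∈ Icc 0 1) {f g : K →ᵇ Y}
    {r : ℝ} (hf : f ∈ closedBall 0 r) (hg : g ∈ closedBall 0 r) :
    f + φ • (g - f) ∈ closedBall 0 r := by
  have hr : 0 ≤ r := nonneg_of_mem_closedBall hf
  rw [mem_closedBall_zero_iff, norm_le hr] at hf hg ⊢
  intro x
  exact mem_closedBall_zero_iff.1 <| (convex_closedBall (0 : Y) r).add_smul_sub_mem
    (mem_closedBall_zero_iff.2 (hf x)) (mem_closedBall_zero_iff.2 (hg x)) (hφ x)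

theorem dist_apply_le_dist_add_smul_sub {φ : K →ᵇ ℝ} {x : K} (hx : φ x = 1) (f g h : K →ᵇ Y) :
    dist (g x) (h x) ≤ dist (f + φ • (g - f)) (f + φ • (h - f)) := by
  have apply_eq (k : K →ᵇ Y) : (f + φ • (k - f)) x = k x := by
    change f x + φ x • (k x - f x) = k x
    rw [hx, one_smul, add_sub_cancel]
  simpa only [apply_eq] using dist_coe_le_dist (f := f + φ • (g - f)) (g := f + φ • (h - f)) x

theorem tendsto_toWeakSpace_add_smul [RCLike 𝕜] [NormedSpace 𝕜 Y] {φ : ι → K →ᵇ ℝ} {C : ℝ}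
    (hφ : ∀ i, ‖φ i‖ ≤ C) (disjoint : Pairwise (Disjoint on fun i => support (φ i)))
    (f p : K →ᵇ Y) :
    Tendsto (fun i => toWeakSpace 𝕜 (K →ᵇ Y) (f + φ i • p)) cofinite
      (𝓝 (toWeakSpace 𝕜 (K →ᵇ Y) f)) := by
  have norm_smul_le_mul (i : ι) : ‖φ i • p‖ ≤ C * ‖p‖ :=
    (norm_smul_le _ _).trans (mul_le_mul_of_nonneg_right (hφ i) (norm_nonneg p))
  have null : Tendsto (fun i => toWeakSpace 𝕜 (K →ᵇ Y) (φ i • p)) cofinite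
      (𝓝 (toWeakSpace 𝕜 (K →ᵇ Y) 0)) :=
    tendsto_toWeakSpace_zero_of_pairwise_disjoint_support norm_smul_le_mul fun i j hij =>
      (disjoint hij).mono (support_smul_subset_left _ _) (support_smul_subset_left _ _)
  simpa only [map_add, map_zero, add_zero] using null.const_add (toWeakSpace 𝕜 (K →ᵇ Y) f)

end Bumps

theorem infinite_closedBall (𝕜 : Type*) {E : Type*} [NontriviallyNormedField 𝕜]
    [NormedAddCommGroup E] [NormedSpace 𝕜 E] [Nontrivial E] (x : E) {r : ℝ} (hr : 0 < r) :
    (closedBall x r).Infinite :=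
  have := Module.punctured_nhds_neBot 𝕜 E x
  infinite_of_mem_nhds x (closedBall_mem_nhds x hr)

theorem stmt_11_general (𝕜 K Y : Type*) [RCLike 𝕜] [TopologicalSpace K] [T35Space K] [Infinite K]
    [NormedAddCommGroup Y] [NormedSpace 𝕜 Y] [Nontrivial Y] :
    HasDiameterTwoProperty 𝕜 (K →ᵇ Y) := by
  let _ : NormedSpace ℝ Y := NormedSpace.restrictScalars ℝ 𝕜 Y
  obtain ⟨φ, φ_mem, φ_peak, φ_disjoint⟩ := exists_seq_bump_pairwise_disjoint_support K
  obtain ⟨y, norm_y⟩ := exists_norm_eq Y zero_le_one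
  have norm_φ (n : ℕ) : ‖φ n‖ ≤ 1 := (norm_le zero_le_one).2 fun x => by
    rw [Real.norm_of_nonneg (φ_mem n x).1]
    exact (φ_mem n x).2
  have const_mem {z : Y} (hz : ‖z‖ = 1) : const K z ∈ closedBall (0 : K →ᵇ Y) 1 :=
    mem_closedBall_zero_iff.2 ((norm_const_le z).trans hz.le)
  refine .of_tendsto (l := cofinite) fun f hf =>
    ⟨fun n => f + φ n • (const K y - f), fun n => f + φ n • (const K (-y) - f),
      fun n => add_smul_sub_mem_closedBall (φ_mem n) hf (const_mem norm_y),
      fun n => add_smul_sub_mem_closedBall (φ_mem n) hf (const_mem (by rwa [norm_neg])),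
      tendsto_toWeakSpace_add_smul norm_φ φ_disjoint f _,
      tendsto_toWeakSpace_add_smul norm_φ φ_disjoint f _, fun n => ?_⟩
  obtain ⟨x, hx⟩ := φ_peak n
  calc (2 : ℝ) = dist y (-y) := by
        rw [dist_eq_norm, sub_neg_eq_add, ← two_smul ℝ, norm_smul, norm_y, Real.norm_two, mul_one]
    _ ≤ _ := dist_apply_le_dist_add_smul_sub hx f (const K y) (const K (-y))

/- STATEMENT 11: For nontrivial complex Banach spaces `X` and `Y`, the Banach space
`C_b(B_X, Y)` of bounded continuous `Y`-valued functions on the closed unit ball of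
`X` has the diameter two property: every nonempty relatively weakly open subset of
its closed unit ball has diameter two. -/
theorem stmt_11 {X Y : Type*}
    [NormedAddCommGroup X] [NormedSpace ℂ X] [CompleteSpace X] [Nontrivial X]
    [NormedAddCommGroup Y] [NormedSpace ℂ Y] [CompleteSpace Y] [Nontrivial Y] :
    ∀ W : Set (WeakSpace ℂ (↥(Metric.closedBall (0 : X) 1) →ᵇ Y)), IsOpen W →
      ((⇑(toWeakSpace ℂ (↥(Metric.closedBall (0 : X) 1) →ᵇ Y)) ⁻¹' W) ∩
        Metric.closedBall (0 : ↥(Metric.closedBall (0 : X) 1) →ᵇ Y) 1).Nonempty →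
      Metric.diam ((⇑(toWeakSpace ℂ (↥(Metric.closedBall (0 : X) 1) →ᵇ Y)) ⁻¹' W) ∩
        Metric.closedBall (0 : ↥(Metric.closedBall (0 : X) 1) →ᵇ Y) 1) = 2 := by
  have : Infinite (closedBall (0 : X) 1) := (infinite_closedBall ℂ 0 zero_lt_one).to_subtype
  exact stmt_11_general ℂ (closedBall (0 : X) 1) Y
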